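/- arXiv:2411.06745 — 2 statements merged into one kernel-verified Lean document; each statement's English description precedes it below -/
import Mathlib

section
/- For every integer r ≥ 1, every σ ∈ M_{r,∞}, every τ ∈ Aut(T_∞), and every word x, one has Q_r(σ∘τ, x) = Q_r(σ, τ(x)) + P_r(σ) · Q_r(τ, x) in ℤ₂. -/
/-!
For a weight `f` on the vertices, the series `Σ_{i≥1} 2^i Σ_{w ∈ W(r,i)} f(xw)` is the only solution
`g` of `g(x) = 2 Σ_{|v| = r-1} (f(xv) + g(xva))`: cutting a word of `W(r,i+1)` at its `r`-th letter,
which is `a`, shows that the series is a solution, and the difference `d` of two solutions satisfies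
`d(x) = 2 Σ d(xva)`, hence is divisible by every power of `2`.

The function `x ↦ Q_r(σ∘τ,x) - Q_r(σ,τ(x))` solves this equation for the weight
`f(y) = P_r(σ,τ(y)) Par(τ,y)`: the definition of `P_r` is exactly what accounts for the change of
`Par(σ,τ(y)) + Q_r(σ,τ(y)a)` when `τ` swaps the children of `y`. If `P_r(σ,·)` is constant,
it factors out of the resulting series and leaves `Q_r(τ,x)`.
-/

/-- Nodes of the infinite binary rooted tree `T_∞` are finite words over `{a,b}`,
encoded as `List Bool` with `a = false` and `b = true`; children of `w` are
`w ++ [false]` and `w ++ [true]`. An automorphism of `T_∞`. -/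
def IsTreeAut (σ : List Bool → List Bool) : Prop :=
  Function.Bijective σ ∧ (∀ w, (σ w).length = w.length) ∧
    ∀ w s, ∃ t, σ (w ++ [s]) = σ w ++ [t]

/-- The parity `Par(σ,x) ∈ {0,1}`: `0` if `σ(xa) = σ(x)a`, and `1` otherwise. -/
def par (σ : List Bool → List Bool) (x : List Bool) : ℕ :=
  if σ (x ++ [false]) = σ x ++ [false] then 0 else 1

/-- `W(r,i)`: the words `s₁ ⋯ s_{ri−1}` of length `r*i − 1` over `{a,b}` with
`s_j = a` whenever `r ∣ j`. -/
noncomputable def Wset (r i : ℕ) : Finset (List Bool) :=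
  ((Finset.univ : Finset (Fin (r*i-1) → Bool)).filter
    (fun s => ∀ j : Fin (r*i-1), r ∣ (j:ℕ)+1 → s j = false)).image List.ofFn

/-- `Q_r(σ,x) := Σ_{i≥1} 2^i Σ_{w ∈ W(r,i)} Par(σ, xw)` in `ℤ₂`. -/
noncomputable def Qr (r : ℕ) (σ : List Bool → List Bool) (x : List Bool) : ℤ_[2] :=
  ∑' i : ℕ, (2:ℤ_[2])^(i+1) * ∑ w ∈ Wset r (i+1), (par σ (x ++ w) : ℤ_[2])

/-- `P_r(σ,x) := (−1)^{Par(σ,x)} + Q_r(σ,xb) − Q_r(σ,xa)` in `ℤ₂`. -/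
noncomputable def Pr (r : ℕ) (σ : List Bool → List Bool) (x : List Bool) : ℤ_[2] :=
  (-1:ℤ_[2])^(par σ x) + Qr r σ (x ++ [true]) - Qr r σ (x ++ [false])

/-- `M_{r,∞}`: tree automorphisms for which `P_r(σ,·)` is constant. -/
def Mset (r : ℕ) : Set (List Bool → List Bool) :=
  {σ | IsTreeAut σ ∧ ∀ x₁ x₂ : List Bool, Pr r σ x₁ = Pr r σ x₂}

/-- `B_{r,∞}`: elements of `M_{r,∞}` with common value `P_r(σ) = 1`. -/
def Bset (r : ℕ) : Set (List Bool → List Bool) :=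
  {σ | σ ∈ Mset r ∧ Pr r σ [] = 1}

theorem mem_Wset {r i : ℕ} {w : List Bool} :
    w ∈ Wset r i ↔ w.length = r * i - 1 ∧ ∀ j, r ∣ j + 1 → w.getD j false = false := by
  simp only [Wset, Finset.mem_image, Finset.mem_filter, Finset.mem_univ, true_and]
  constructor
  · rintro ⟨s, hs, rfl⟩
    refine ⟨List.length_ofFn, fun j hj => ?_⟩
    by_cases h : j < r * i - 1
    · simpa [List.getD, h] using hs ⟨j, h⟩ hj
    · simp [List.getD, h]
  · rintro ⟨hlen, hw⟩
    exact ⟨fun j => w.getD j false, fun j => hw j,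
      List.ext_getElem (by simp [hlen]) fun n _ hn => by simp [hn]⟩

theorem mem_Wset_one {r : ℕ} {w : List Bool} : w ∈ Wset r 1 ↔ w.length = r - 1 := by
  rw [mem_Wset, mul_one, and_iff_left_iff_imp]
  intro hlen j hj
  have hle : r ≤ j + 1 := Nat.le_of_dvd j.succ_pos hj
  exact List.getD_eq_default _ _ (by omega)

theorem append_false_append_mem_Wset_iff {r i : ℕ} {v u : List Bool} (hv : v.length + 1 = r) :
    v ++ [false] ++ u ∈ Wset r (i + 2) ↔ u ∈ Wset r (i + 1) := by
  have hlen : (v ++ [false]).length = r := by simpa using hv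
  have hmul : r * (i + 2) = r + r * (i + 1) := by ring
  have hpos : 0 < r * (i + 1) := Nat.mul_pos (by omega) i.succ_pos
  rw [mem_Wset, mem_Wset, List.length_append, hlen]
  refine and_congr (by omega) ⟨fun h j hj => ?_, fun h j hj => ?_⟩
  · have hget := h (r + j) (by rw [add_assoc]; exact (Nat.dvd_add_right dvd_rfl).2 hj)
    rwa [List.getD_append_right _ _ _ _ (by omega), hlen, Nat.add_sub_cancel_left] at hget
  · have hle : r ≤ j + 1 := Nat.le_of_dvd j.succ_pos hj
    obtain rfl | hrj : j = v.length ∨ r ≤ j := by omega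
    · simp [List.getD]
    · rw [List.getD_append_right _ _ _ _ (by omega), hlen]
      exact h _ (by rw [← Nat.sub_add_comm hrj]; exact Nat.dvd_sub hj dvd_rfl)

theorem exists_eq_append_false_append {r i : ℕ} (hr : 1 ≤ r) {w : List Bool}
    (hw : w ∈ Wset r (i + 2)) : ∃ v u, v.length + 1 = r ∧ w = v ++ [false] ++ u := by
  obtain ⟨hlen, hfalse⟩ := mem_Wset.1 hw
  have hmul : r * (i + 2) = r * i + r + r := by ring
  have hlt : r - 1 < w.length := by omega
  have hget : w[r - 1] = false := by
    simpa [List.getD, hlt] using hfalse (r - 1) (by rw [Nat.sub_add_cancel hr])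
  refine ⟨w.take (r - 1), w.drop (r - 1 + 1), by simp; omega, ?_⟩
  rw [← hget, List.take_concat_get', List.take_append_drop]

theorem sum_Wset_add_two {M : Type*} [AddCommMonoid M] {r : ℕ} (hr : 1 ≤ r) (i : ℕ)
    (f : List Bool → M) :
    ∑ w ∈ Wset r (i + 2), f w =
      ∑ v ∈ Wset r 1, ∑ u ∈ Wset r (i + 1), f (v ++ [false] ++ u) := by
  rw [← Finset.sum_product']
  symm
  have hlen {v : List Bool} : v ∈ Wset r 1 ↔ v.length + 1 = r := by rw [mem_Wset_one]; omega
  refine Finset.sum_bij (fun p _ => p.1 ++ [false] ++ p.2) ?_ ?_ ?_ fun _ _ => rfl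
  · intro p hp
    obtain ⟨hv, hu⟩ := Finset.mem_product.1 hp
    exact (append_false_append_mem_Wset_iff (hlen.1 hv)).2 hu
  · intro p hp q hq h
    have hpq : p.1.length = q.1.length :=
      (mem_Wset_one.1 (Finset.mem_product.1 hp).1).trans
        (mem_Wset_one.1 (Finset.mem_product.1 hq).1).symm
    obtain ⟨hleft, hright⟩ := List.append_inj h (by simp [hpq])
    exact Prod.ext (List.append_cancel_right hleft) hright
  · intro w hw
    obtain ⟨v, u, hv, rfl⟩ := exists_eq_append_false_append hr hw
    exact ⟨(v, u), Finset.mem_product.2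
      ⟨hlen.2 hv, (append_false_append_mem_Wset_iff hv).1 hw⟩, rfl⟩

/-- The series `Σ_{i≥1} 2^i Σ_{w ∈ W(r,i)} f(xw)` attached to a weight `f` on the vertices of the
tree. The weight `Par(σ,·)` gives `Q_r(σ,x)`; other weights express `Q_r` of a composite.
As in `Qr`, the index `i` of the sum is shifted by one. -/
noncomputable def wordSeries (r : ℕ) (f : List Bool → ℤ_[2]) (x : List Bool) : ℤ_[2] :=
  ∑' i : ℕ, 2 ^ (i + 1) * ∑ w ∈ Wset r (i + 1), f (x ++ w)

theorem Qr_eq_wordSeries (r : ℕ) (σ : List Bool → List Bool) (x : List Bool) :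
    Qr r σ x = wordSeries r (fun y => (par σ y : ℤ_[2])) x :=
  rfl

theorem summable_two_pow_succ_mul (c : ℕ → ℤ_[2]) :
    Summable fun i : ℕ => 2 ^ (i + 1) * c i := by
  have hgeom : Summable fun i : ℕ => (1 / 2 : ℝ) ^ (i + 1) :=
    (summable_nat_add_iff 1).2 summable_geometric_two
  refine hgeom.of_norm_bounded fun i => ?_
  have htwo : ‖(2 : ℤ_[2])‖ = 1 / 2 := by simpa using PadicInt.norm_p (p := 2)
  rw [norm_mul, norm_pow, htwo]
  exact mul_le_of_le_one_right (by positivity) (PadicInt.norm_le_one _)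

theorem wordSeries_const_mul (r : ℕ) (c : ℤ_[2]) (f : List Bool → ℤ_[2]) (x : List Bool) :
    wordSeries r (fun y => c * f y) x = c * wordSeries r f x := by
  simp only [wordSeries, ← Finset.mul_sum, mul_left_comm _ c]
  exact (summable_two_pow_succ_mul _).tsum_mul_left c

theorem wordSeries_eq_two_mul_sum {r : ℕ} (hr : 1 ≤ r) (f : List Bool → ℤ_[2])
    (x : List Bool) :
    wordSeries r f x =
      2 * ∑ v ∈ Wset r 1, (f (x ++ v) + wordSeries r f (x ++ v ++ [false])) := by
  have htail : ∑' i : ℕ, 2 ^ (i + 2) * ∑ w ∈ Wset r (i + 2), f (x ++ w) =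
      2 * ∑ v ∈ Wset r 1, wordSeries r f (x ++ v ++ [false]) := by
    simp only [wordSeries]
    rw [← Summable.tsum_finsetSum fun _ _ => summable_two_pow_succ_mul _,
      ← (summable_sum fun _ _ => summable_two_pow_succ_mul _).tsum_mul_left]
    refine tsum_congr fun i => ?_
    rw [sum_Wset_add_two hr, ← Finset.mul_sum, pow_succ' _ (i + 1), mul_assoc]
    simp only [List.append_assoc]
  rw [Finset.sum_add_distrib, mul_add, ← htail, wordSeries,
    (summable_two_pow_succ_mul _).tsum_eq_zero_add, zero_add, pow_one]

theorem Qr_eq_two_mul_sum {r : ℕ} (hr : 1 ≤ r) (σ : List Bool → List Bool) (x : List Bool) :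
    Qr r σ x =
      2 * ∑ v ∈ Wset r 1, ((par σ (x ++ v) : ℤ_[2]) + Qr r σ (x ++ v ++ [false])) := by
  simp only [Qr_eq_wordSeries]
  exact wordSeries_eq_two_mul_sum hr (fun y => (par σ y : ℤ_[2])) x

theorem eq_zero_of_forall_two_pow_dvd {z : ℤ_[2]} (h : ∀ n : ℕ, 2 ^ n ∣ z) : z = 0 := by
  by_contra hz
  have htwo : Prime (2 : ℤ_[2]) := mod_cast PadicInt.prime_p (p := 2)
  exact FiniteMultiplicity.not_iff_forall.2 h (.of_prime_left htwo hz)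

theorem eq_wordSeries_of_recursion {r : ℕ} (hr : 1 ≤ r) {f g : List Bool → ℤ_[2]}
    (hg : ∀ x, g x = 2 * ∑ v ∈ Wset r 1, (f (x ++ v) + g (x ++ v ++ [false])))
    (x : List Bool) : g x = wordSeries r f x := by
  have hdiff (y : List Bool) : g y - wordSeries r f y =
      2 * ∑ v ∈ Wset r 1,
        (g (y ++ v ++ [false]) - wordSeries r f (y ++ v ++ [false])) := by
    rw [hg y, wordSeries_eq_two_mul_sum hr f y, ← mul_sub, ← Finset.sum_sub_distrib]
    simp only [add_sub_add_left_eq_sub]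
  have hdvd (n : ℕ) : ∀ y, 2 ^ n ∣ g y - wordSeries r f y := by
    induction n with
    | zero => simp
    | succ n ih =>
      intro y
      rw [hdiff y, pow_succ']
      exact mul_dvd_mul_left 2 (Finset.dvd_sum fun v _ => ih _)
  exact sub_eq_zero.1 (eq_zero_of_forall_two_pow_dvd fun n => hdvd n x)

namespace IsTreeAut

variable {σ τ : List Bool → List Bool}

theorem par_eq_zero_or_one (hσ : IsTreeAut σ) (y : List Bool) :
    (par σ y = 0 ∧ ∀ c, σ (y ++ [c]) = σ y ++ [c]) ∨
      (par σ y = 1 ∧ ∀ c, σ (y ++ [c]) = σ y ++ [!c]) := by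
  obtain ⟨s, hs⟩ := hσ.2.2 y false
  obtain ⟨t, ht⟩ := hσ.2.2 y true
  have hne : s ≠ t := by
    rintro rfl
    simpa using hσ.1.1 (hs.trans ht.symm)
  cases s <;> cases t <;> simp_all [par]

theorem par_comp {R : Type*} [Ring R] (hσ : IsTreeAut σ) (hτ : IsTreeAut τ) (y : List Bool) :
    (par (σ ∘ τ) y : R) = par σ (τ y) + (-1) ^ par σ (τ y) * par τ y := by
  rcases hτ.par_eq_zero_or_one y with ⟨hpar, hchild⟩ | ⟨hpar, hchild⟩ <;>
    rcases hσ.par_eq_zero_or_one (τ y) with ⟨hpar', hchild'⟩ | ⟨hpar', hchild'⟩ <;>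
    rw [hpar, hpar'] <;> simp [par, hchild, hchild']

theorem map_apply_append_false {R : Type*} [Ring R] (hτ : IsTreeAut τ) (g : List Bool → R)
    (y : List Bool) :
    g (τ (y ++ [false])) =
      g (τ y ++ [false]) + (g (τ y ++ [true]) - g (τ y ++ [false])) * par τ y := by
  rcases hτ.par_eq_zero_or_one y with ⟨hpar, hchild⟩ | ⟨hpar, hchild⟩ <;>
    simp [hpar, hchild]

theorem par_comp_add_Qr (r : ℕ) (hσ : IsTreeAut σ) (hτ : IsTreeAut τ) (y : List Bool) :
    (par (σ ∘ τ) y : ℤ_[2]) + Qr r σ (τ (y ++ [false])) =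
      par σ (τ y) + Qr r σ (τ y ++ [false]) + Pr r σ (τ y) * par τ y := by
  rw [hσ.par_comp hτ, hτ.map_apply_append_false (Qr r σ), Pr]
  ring

theorem exists_apply_append (hτ : IsTreeAut τ) (x v : List Bool) :
    ∃ u, u.length = v.length ∧ τ (x ++ v) = τ x ++ u := by
  induction v using List.reverseRecOn with
  | nil => exact ⟨[], rfl, by simp⟩
  | append_singleton v s ih =>
    obtain ⟨u, hlen, hu⟩ := ih
    obtain ⟨t, ht⟩ := hτ.2.2 (x ++ v) s
    exact ⟨u ++ [t], by simp [hlen], by rw [← List.append_assoc, ht, hu, List.append_assoc]⟩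

theorem sum_apply_append {M : Type*} [AddCommMonoid M] (hτ : IsTreeAut τ) (r : ℕ)
    (x : List Bool) (g : List Bool → M) :
    ∑ v ∈ Wset r 1, g (τ (x ++ v)) = ∑ v ∈ Wset r 1, g (τ x ++ v) := by
  choose u hlen hu using hτ.exists_apply_append x
  have hmaps : Set.MapsTo u (Wset r 1) (Wset r 1) := fun v hv =>
    mem_Wset_one.2 ((hlen v).trans (mem_Wset_one.1 hv))
  have hinj : Set.InjOn u (Wset r 1) := fun v _ w _ hvw =>
    List.append_cancel_left (hτ.1.1 (by rw [hu, hu, hvw]))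
  exact Finset.sum_nbij u hmaps hinj (Finset.surjOn_of_injOn_of_card_le u hmaps hinj le_rfl)
    fun v _ => by rw [hu]

end IsTreeAut

theorem Qr_comp_general {r : ℕ} (hr : 1 ≤ r) {σ τ : List Bool → List Bool}
    (hσ : IsTreeAut σ) (hτ : IsTreeAut τ) (x : List Bool) :
    Qr r (σ ∘ τ) x =
      Qr r σ (τ x) + wordSeries r (fun y => Pr r σ (τ y) * par τ y) x := by
  rw [← sub_eq_iff_eq_add']
  refine eq_wordSeries_of_recursion hr (g := fun y => Qr r (σ ∘ τ) y - Qr r σ (τ y))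
    (fun y => ?_) x
  rw [Qr_eq_two_mul_sum hr (σ ∘ τ) y, Qr_eq_two_mul_sum hr σ (τ y), ← hτ.sum_apply_append r y
    (fun z => (par σ z : ℤ_[2]) + Qr r σ (z ++ [false])), ← mul_sub, ← Finset.sum_sub_distrib]
  congr 1
  refine Finset.sum_congr rfl fun v _ => ?_
  linear_combination hσ.par_comp_add_Qr r hτ (y ++ v)

/-- For every integer `r ≥ 1`, every `σ ∈ M_{r,∞}`, every
`τ ∈ Aut(T_∞)`, and every word `x`, one has
`Q_r(σ∘τ, x) = Q_r(σ, τ(x)) + P_r(σ) · Q_r(τ, x)` in `ℤ₂`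
(the common value `P_r(σ)` being realized as `Pr r σ []`). -/
theorem Qr_comp (r : ℕ) (hr : 1 ≤ r) (σ τ : List Bool → List Bool)
    (hσ : σ ∈ Mset r) (hτ : IsTreeAut τ) (x : List Bool) :
    Qr r (σ ∘ τ) x = Qr r σ (τ x) + Pr r σ [] * Qr r τ x := by
  have hP (y : List Bool) : Pr r σ y = Pr r σ [] := hσ.2 y []
  simp only [Qr_comp_general hr hσ.1 hτ, hP, wordSeries_const_mul, Qr_eq_wordSeries]
end

section
/- Let r ≥ 1 and n ≥ 0 be integers, let x be a word, and let σ₁, σ₂ ∈ Aut(T_∞) satisfy Par(σ₁, xw) = Par(σ₂, xw) for every word w (including the empty word) of length at most nr. Then P_r(σ₁, x) ≡ P_r(σ₂, x) (mod 2^{n+1}) in ℤ₂. -/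
/-!
The parities entering `P_r(σ, x)` are those at `x` and at the words `x s w` with `s` a letter and
`w ∈ W(r, i)`, and `s w` has length `r i`. The layers `i ≤ n` thus agree for `σ₁` and `σ₂`, while
each layer `i > n` carries a factor `2 ^ i`, hence vanishes modulo `2 ^ (n + 1)`.
-/

section PadicSeries

variable {p : ℕ} [Fact p.Prime]

theorem summable_prime_pow_mul (c : ℕ → ℤ_[p]) : Summable fun i ↦ (p : ℤ_[p]) ^ i * c i := by
  have hp : ‖(p : ℤ_[p])‖ < 1 := PadicInt.norm_lt_one_iff_dvd _ |>.mpr dvd_rfl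
  refine .of_norm_bounded (summable_geometric_of_lt_one (norm_nonneg _) hp) fun i ↦ ?_
  rw [norm_mul, norm_pow]
  exact mul_le_of_le_one_right (by positivity) (PadicInt.norm_le_one _)

theorem prime_pow_dvd_tsum {ι : Type*} {f : ι → ℤ_[p]} {n : ℕ} (h : ∀ i, (p : ℤ_[p]) ^ n ∣ f i) :
    (p : ℤ_[p]) ^ n ∣ ∑' i, f i := by
  simp only [← Ideal.mem_span_singleton, ← PadicInt.norm_le_pow_iff_mem_span_pow] at h ⊢
  exact IsUltrametricDist.norm_tsum_le_of_forall_le_of_nonneg (by positivity) h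

end PadicSeries

theorem length_of_mem_Wset {r i : ℕ} {w : List Bool} (hw : w ∈ Wset r i) :
    w.length = r * i - 1 := by
  obtain ⟨s, -, rfl⟩ := Finset.mem_image.mp hw
  exact List.length_ofFn

theorem summable_Qr (r : ℕ) (σ : List Bool → List Bool) (x : List Bool) :
    Summable fun i ↦ (2 : ℤ_[2]) ^ (i + 1) * ∑ w ∈ Wset r (i + 1), (par σ (x ++ w) : ℤ_[2]) := by
  have h := summable_prime_pow_mul (p := 2) fun i ↦ ∑ w ∈ Wset r i, (par σ (x ++ w) : ℤ_[2])
  simp only [Nat.cast_ofNat] at h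
  exact h.comp_injective (add_left_injective 1)

section Congruence

variable {r n : ℕ} {σ₁ σ₂ : List Bool → List Bool} {x : List Bool}

theorem two_pow_dvd_Qr_sub_Qr
    (hpar : ∀ i ∈ Finset.Icc 1 n, ∀ w ∈ Wset r i, par σ₁ (x ++ w) = par σ₂ (x ++ w)) :
    (2 : ℤ_[2]) ^ (n + 1) ∣ Qr r σ₁ x - Qr r σ₂ x := by
  rw [Qr, Qr, ← (summable_Qr r σ₁ x).tsum_sub (summable_Qr r σ₂ x)]
  refine prime_pow_dvd_tsum fun i ↦ ?_
  rw [← mul_sub]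
  rcases lt_or_ge i n with hi | hi
  · have hsum : ∑ w ∈ Wset r (i + 1), (par σ₁ (x ++ w) : ℤ_[2]) =
        ∑ w ∈ Wset r (i + 1), (par σ₂ (x ++ w) : ℤ_[2]) :=
      Finset.sum_congr rfl fun w hw ↦ by
        rw [hpar (i + 1) (Finset.mem_Icc.mpr ⟨i.succ_pos, hi⟩) w hw]
    rw [hsum, sub_self, mul_zero]
    exact dvd_zero _
  · exact (pow_dvd_pow 2 (Nat.succ_le_succ hi)).mul_right _

theorem two_pow_dvd_Qr_append_sub_Qr_append (hr : 1 ≤ r)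
    (hpar : ∀ w : List Bool, w.length ≤ n * r → par σ₁ (x ++ w) = par σ₂ (x ++ w)) (s : Bool) :
    (2 : ℤ_[2]) ^ (n + 1) ∣ Qr r σ₁ (x ++ [s]) - Qr r σ₂ (x ++ [s]) := by
  refine two_pow_dvd_Qr_sub_Qr fun i hi w hw ↦ ?_
  obtain ⟨hi_pos, hi_le⟩ := Finset.mem_Icc.mp hi
  have hlen : (s :: w).length = r * i := by
    rw [List.length_cons, length_of_mem_Wset hw, Nat.sub_add_cancel (Nat.mul_pos hr hi_pos)]
  rw [List.append_assoc, List.singleton_append]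
  exact hpar (s :: w) (hlen.trans_le (mul_comm r i ▸ Nat.mul_le_mul_right r hi_le))

theorem Pr_congruent_of_agree_general (hr : 1 ≤ r)
    (hpar : ∀ w : List Bool, w.length ≤ n * r → par σ₁ (x ++ w) = par σ₂ (x ++ w)) :
    (2 : ℤ_[2]) ^ (n + 1) ∣ Pr r σ₁ x - Pr r σ₂ x := by
  have hroot : par σ₁ x = par σ₂ x := by simpa using hpar [] (Nat.zero_le _)
  have hdiff : Pr r σ₁ x - Pr r σ₂ x =
      (Qr r σ₁ (x ++ [true]) - Qr r σ₂ (x ++ [true])) -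
        (Qr r σ₁ (x ++ [false]) - Qr r σ₂ (x ++ [false])) := by
    rw [Pr, Pr, hroot]
    ring
  have hQr (s : Bool) := two_pow_dvd_Qr_append_sub_Qr_append hr hpar s
  exact hdiff ▸ dvd_sub (hQr true) (hQr false)

end Congruence

/-- Let `r ≥ 1`, `n ≥ 0`, let `x` be a word, and let `σ₁, σ₂ ∈ Aut(T_∞)`
satisfy `Par(σ₁, xw) = Par(σ₂, xw)` for every word `w` (including the empty word) of
length at most `nr`. Then `P_r(σ₁, x) ≡ P_r(σ₂, x) (mod 2^{n+1})` in `ℤ₂`. -/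
theorem Pr_congruent_of_agree (r : ℕ) (hr : 1 ≤ r) (n : ℕ) (x : List Bool)
    (σ₁ σ₂ : List Bool → List Bool) (h₁ : IsTreeAut σ₁) (h₂ : IsTreeAut σ₂)
    (hpar : ∀ w : List Bool, w.length ≤ n * r → par σ₁ (x ++ w) = par σ₂ (x ++ w)) :
    (2:ℤ_[2])^(n+1) ∣ (Pr r σ₁ x - Pr r σ₂ x) :=
  Pr_congruent_of_agree_general hr hpar
end
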